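/- arXiv:1212.6621 — 2 statements merged into one kernel-verified Lean document; each statement's English description precedes it below -/
import Mathlib

section
/- Let m ≥ 2 and n ≥ 1 be integers. Then for every τ in the upper half-plane ℍ, the Weierstrass unit admits the product expression h_{m,n}(τ) = g_{[1/m, 1/mn]}(τ) · g_{[−1/m, 1/mn]}(τ) · g_{[0, 1/m]}(τ)² / ( g_{[1/m, 1/m]}(τ) · g_{[−1/m, 1/m]}(τ) · g_{[0, 1/mn]}(τ)² ). -/
/-!
Write `q = e(τ)`, `w = e(z)` with `e(x) = e^{2πix}`, and let
`F(z) = (1 − w) ∏_{n ≥ 1} (1 − qⁿ w)(1 − qⁿ w⁻¹)`. Up to an exponential factor the Siegel function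
`g_{[r,s]}(τ)` is `F(rτ + s)` (`siegel_eq_thetaProd`), and in `g_{[r,s]} g_{[−r,s]} / g_{[0,s]}²`
the factors depending on `s` cancel (`siegel_mul_siegel_neg`). The theorem therefore follows, by
taking `b = τ/m` and dividing the cases `z = 1/mn` and `z = 1/m`, from the identity
`c (℘(z) − ℘(b)) = F(z + b) F(z − b) / F(z)²` with a constant `c ≠ 0` depending on `b`
(`exists_mul_wp_sub_wp_eq`).

For this identity, `F` is entire, vanishes exactly at the lattice points with a simple zero at `0`,
and satisfies `F(z + 1) = F(z)` and `F(z + τ) = F(−z) = −w⁻¹ F(z)`. So the right-hand side `R` is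
an even elliptic function with at most double poles at lattice points and no others. With
`c = lim z² R(z) = F(b) F(−b) / F'(0)²`, the function `R − c ℘` has no double pole, by evenness no
simple pole either, and is constant by Liouville's theorem
(`PeriodPair.const_of_even_of_periodic`). Since `R(b) = 0`, the constant is `−c ℘(b)`. This avoids
any discussion of the order of vanishing of `℘ − ℘(b)` at `b`, which depends on whether `2b` is a
lattice point.
-/

open scoped Real

/-- The point `a ω₁ + b ω₂` of the lattice spanned by `ω₁, ω₂`. -/
noncomputable def latticePt (ω₁ ω₂ : ℂ) (p : ℤ × ℤ) : ℂ := p.1 * ω₁ + p.2 * ω₂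

/-- The Weierstrass ℘-function relative to the lattice `ℤω₁ + ℤω₂`:
`℘(z;Λ) = 1/z² + Σ_{ω ∈ Λ∖{0}} (1/(z−ω)² − 1/ω²)`. -/
noncomputable def wp (ω₁ ω₂ z : ℂ) : ℂ :=
  1 / z ^ 2 + ∑' p : {p : ℤ × ℤ // p ≠ 0},
    (1 / (z - latticePt ω₁ ω₂ p.1) ^ 2 - 1 / latticePt ω₁ ω₂ p.1 ^ 2)

/-- `℘_{[r,s]}(τ) = ℘(rτ + s; [τ,1])`. -/
noncomputable def wprs (r s : ℚ) (τ : ℂ) : ℂ := wp τ 1 ((r : ℂ) * τ + (s : ℂ))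

/-- `q^x := e^{2πixτ}`. -/
noncomputable def qpow (τ : ℂ) (x : ℝ) : ℂ := Complex.exp (2 * (π : ℂ) * Complex.I * (x : ℂ) * τ)

/-- The Siegel function `g_{[r,s]}(τ)`. -/
noncomputable def siegel (r s : ℚ) (τ : ℂ) : ℂ :=
  -qpow τ ((1/2) * ((r : ℝ) ^ 2 - (r : ℝ) + 1/6)) *
    Complex.exp ((π : ℂ) * Complex.I * (s : ℂ) * ((r : ℂ) - 1)) *
    (1 - qpow τ (r : ℝ) * Complex.exp (2 * (π : ℂ) * Complex.I * (s : ℂ))) *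
    ∏' n : ℕ, ((1 - qpow τ ((n + 1 : ℝ) + (r : ℝ)) * Complex.exp (2 * (π : ℂ) * Complex.I * (s : ℂ))) *
      (1 - qpow τ ((n + 1 : ℝ) - (r : ℝ)) * Complex.exp (-(2 * (π : ℂ) * Complex.I * (s : ℂ)))))

/-- The Dedekind eta function with the paper's normalization
`η(τ) = √(2π) e^{πi/4} q^{1/24} ∏_{n≥1} (1 − qⁿ)`. -/
noncomputable def eta (τ : ℂ) : ℂ :=
  (Real.sqrt (2 * π) : ℂ) * Complex.exp ((π : ℂ) * Complex.I / 4) * qpow τ (1/24) *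
    ∏' n : ℕ, (1 - qpow τ (n + 1 : ℝ))

/-- `g₂(τ) = 60 Σ_{ω ∈ [τ,1]∖{0}} ω⁻⁴`. -/
noncomputable def g2 (τ : ℂ) : ℂ := 60 * ∑' p : {p : ℤ × ℤ // p ≠ 0}, 1 / latticePt τ 1 p.1 ^ 4

/-- `g₃(τ) = 140 Σ_{ω ∈ [τ,1]∖{0}} ω⁻⁶`. -/
noncomputable def g3 (τ : ℂ) : ℂ := 140 * ∑' p : {p : ℤ × ℤ // p ≠ 0}, 1 / latticePt τ 1 p.1 ^ 6

/-- The elliptic modular function `j(τ) = 1728 g₂(τ)³ / (g₂(τ)³ − 27 g₃(τ)²)`. -/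
noncomputable def jfun (τ : ℂ) : ℂ := 1728 * g2 τ ^ 3 / (g2 τ ^ 3 - 27 * g3 τ ^ 2)

/-- The Weierstrass unit `h_{m,n}(τ)`. -/
noncomputable def hweier (m n : ℕ) (τ : ℂ) : ℂ :=
  (wprs 0 (1 / (m * n : ℚ)) τ - wprs (1 / (m : ℚ)) 0 τ) /
    (wprs 0 (1 / (m : ℚ)) τ - wprs (1 / (m : ℚ)) 0 τ)


/-! ### The theta product -/

/-- The infinite `q`-Pochhammer symbol `(w; q)_∞ = ∏_{n ≥ 0} (1 − qⁿ w)`, written with `1 + _` to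
match the infinite-product API. -/
noncomputable def qPoch (q w : ℂ) : ℂ := ∏' n : ℕ, (1 + -(q ^ n * w))

lemma summable_qPoch {q : ℂ} (hq : ‖q‖ < 1) (w : ℂ) : Summable fun n : ℕ ↦ ‖-(q ^ n * w)‖ := by
  simpa using (summable_geometric_of_lt_one (norm_nonneg q) hq).mul_right ‖w‖

lemma multipliable_qPoch {q : ℂ} (hq : ‖q‖ < 1) (w : ℂ) :
    Multipliable fun n : ℕ ↦ (1 + -(q ^ n * w)) :=
  multipliable_one_add_of_summable (summable_qPoch hq w)

lemma qPoch_ne_zero {q w : ℂ} (hq : ‖q‖ < 1) (h : ∀ n : ℕ, q ^ n * w ≠ 1) : qPoch q w ≠ 0 :=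
  tprod_one_add_ne_zero_of_summable
    (fun n hn ↦ h n (by linear_combination -hn)) (summable_qPoch hq w)

lemma qPoch_eq_mul {q : ℂ} (hq : ‖q‖ < 1) (w : ℂ) :
    qPoch q w = (1 - w) * qPoch q (q * w) := by
  have e : (fun n : ℕ ↦ 1 + -(q ^ (n + 1) * w)) = fun n : ℕ ↦ 1 + -(q ^ n * (q * w)) := by
    funext n; ring
  have h := tprod_eq_zero_mul' (f := fun n : ℕ ↦ 1 + -(q ^ n * w))
    (by rw [e]; exact multipliable_qPoch hq (q * w))
  rw [e] at h
  rw [qPoch, h, qPoch]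
  congr 1
  ring

lemma differentiable_qPoch {q : ℂ} (hq : ‖q‖ < 1) : Differentiable ℂ (qPoch q) := by
  intro w
  have hu : Summable fun n : ℕ ↦ ‖q‖ ^ n * (‖w‖ + 1) :=
    (summable_geometric_of_lt_one (norm_nonneg q) hq).mul_right _
  have h := Summable.hasProdLocallyUniformlyOn_nat_one_add (f := fun (n : ℕ) (w : ℂ) ↦ -(q ^ n * w))
    (K := Metric.ball 0 (‖w‖ + 1)) Metric.isOpen_ball hu
    (.of_forall fun n x hx ↦ by
      have hx' : ‖x‖ < ‖w‖ + 1 := by simpa using hx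
      simp only [norm_neg, norm_mul, norm_pow]
      gcongr)
    (fun n ↦ by fun_prop)
  have hd : DifferentiableOn ℂ (qPoch q) (Metric.ball 0 (‖w‖ + 1)) :=
    h.differentiableOn (.of_forall fun s ↦ by
      simpa [Finset.prod_fn] using
        DifferentiableOn.finsetProd (fun _ _ ↦ by fun_prop)) Metric.isOpen_ball
  exact hd.differentiableAt (Metric.isOpen_ball.mem_nhds (by simp))

/-- The exponential `e(z) = e^{2πiz}`. -/
noncomputable def expTwoPiI (z : ℂ) : ℂ := Complex.exp (2 * (π : ℂ) * Complex.I * z)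

lemma expTwoPiI_add (x y : ℂ) : expTwoPiI (x + y) = expTwoPiI x * expTwoPiI y := by
  rw [expTwoPiI, mul_add, Complex.exp_add]; rfl

lemma expTwoPiI_neg (x : ℂ) : expTwoPiI (-x) = (expTwoPiI x)⁻¹ := by
  rw [expTwoPiI, mul_neg, Complex.exp_neg]; rfl

lemma expTwoPiI_sub (x y : ℂ) : expTwoPiI (x - y) = expTwoPiI x * (expTwoPiI y)⁻¹ := by
  rw [sub_eq_add_neg, expTwoPiI_add, expTwoPiI_neg]

lemma expTwoPiI_ne_zero (x : ℂ) : expTwoPiI x ≠ 0 := Complex.exp_ne_zero _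

lemma expTwoPiI_zero : expTwoPiI 0 = 1 := by simp [expTwoPiI]

lemma expTwoPiI_one : expTwoPiI 1 = 1 := by
  rw [expTwoPiI, mul_one, Complex.exp_two_pi_mul_I]

lemma expTwoPiI_nat_mul (n : ℕ) (x : ℂ) : expTwoPiI (n * x) = expTwoPiI x ^ n := by
  rw [expTwoPiI, expTwoPiI, ← Complex.exp_nat_mul]; congr 1; ring

lemma expTwoPiI_eq_one_iff {x : ℂ} : expTwoPiI x = 1 ↔ ∃ n : ℤ, x = n := by
  rw [expTwoPiI, Complex.exp_eq_one_iff]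
  refine exists_congr fun n ↦ ?_
  rw [mul_comm, mul_left_inj' Complex.two_pi_I_ne_zero]

lemma differentiable_expTwoPiI : Differentiable ℂ expTwoPiI := by
  unfold expTwoPiI; fun_prop

lemma norm_expTwoPiI_lt_one {τ : ℂ} (hτ : 0 < τ.im) : ‖expTwoPiI τ‖ < 1 :=
  UpperHalfPlane.norm_exp_two_pi_I_lt_one ⟨τ, hτ⟩

/-- The theta product `F(z) = (1 − w) ∏_{n ≥ 1} (1 − qⁿ w)(1 − qⁿ w⁻¹)` with `q = e(τ)` and
`w = e(z)`, in the form `(w; q)_∞ (q w⁻¹; q)_∞`. It is `g_{[r,s]}(τ)` at `z = rτ + s`, up to an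
exponential factor. -/
noncomputable def thetaProd (τ z : ℂ) : ℂ :=
  qPoch (expTwoPiI τ) (expTwoPiI z) * qPoch (expTwoPiI τ) (expTwoPiI τ * (expTwoPiI z)⁻¹)

section thetaProd

variable {τ : ℂ} (hτ : 0 < τ.im)
include hτ

lemma differentiable_thetaProd : Differentiable ℂ (thetaProd τ) := by
  have h := differentiable_qPoch (norm_expTwoPiI_lt_one hτ)
  have he := differentiable_expTwoPiI
  exact (h.comp he).mul
    (h.comp ((he.inv expTwoPiI_ne_zero).const_mul _))

lemma thetaProd_neg (z : ℂ) :
    thetaProd τ (-z) = -(expTwoPiI z)⁻¹ * thetaProd τ z := by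
  have hq := norm_expTwoPiI_lt_one hτ
  have hw := expTwoPiI_ne_zero z
  rw [thetaProd, thetaProd, expTwoPiI_neg, inv_inv, qPoch_eq_mul hq (expTwoPiI z)⁻¹,
    qPoch_eq_mul hq (expTwoPiI z)]
  field_simp
  ring

lemma thetaProd_add_tau (z : ℂ) :
    thetaProd τ (z + τ) = -(expTwoPiI z)⁻¹ * thetaProd τ z := by
  have hq0 := expTwoPiI_ne_zero τ
  have hw := expTwoPiI_ne_zero z
  rw [← thetaProd_neg hτ, thetaProd, thetaProd, expTwoPiI_neg, inv_inv, expTwoPiI_add, mul_inv,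
    mul_comm, mul_comm (expTwoPiI z) (expTwoPiI τ)]
  congr 2
  field_simp

omit hτ in
lemma thetaProd_add_one (z : ℂ) : thetaProd τ (z + 1) = thetaProd τ z := by
  simp [thetaProd, expTwoPiI_add, expTwoPiI_one]

/-- `F` vanishes only at lattice points. -/
lemma thetaProd_ne_zero {z : ℂ} (hz : ∀ a b : ℤ, z ≠ a * τ + b) : thetaProd τ z ≠ 0 := by
  have hq := norm_expTwoPiI_lt_one hτ
  refine mul_ne_zero (qPoch_ne_zero hq fun n h ↦ ?_) (qPoch_ne_zero hq fun n h ↦ ?_)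
  · rw [← expTwoPiI_nat_mul, ← expTwoPiI_add, expTwoPiI_eq_one_iff] at h
    obtain ⟨b, hb⟩ := h
    exact hz (-n) b (by push_cast; linear_combination hb)
  · rw [← mul_assoc, ← expTwoPiI_nat_mul, ← expTwoPiI_add, ← expTwoPiI_sub,
      expTwoPiI_eq_one_iff] at h
    obtain ⟨b, hb⟩ := h
    exact hz (n + 1) (-b) (by push_cast; linear_combination -hb)

lemma thetaProd_zero : thetaProd τ 0 = 0 := by
  rw [thetaProd, expTwoPiI_zero, qPoch_eq_mul (norm_expTwoPiI_lt_one hτ) 1]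
  simp

/-- The zero of `F` at the origin is simple: `F'(0) = −2πi ∏_{n ≥ 1} (1 − qⁿ)²`. -/
lemma deriv_thetaProd_zero_ne_zero : deriv (thetaProd τ) 0 ≠ 0 := by
  have hq := norm_expTwoPiI_lt_one hτ
  have h := differentiable_qPoch hq
  have he := differentiable_expTwoPiI
  set P : ℂ → ℂ := fun z ↦ qPoch (expTwoPiI τ) (expTwoPiI τ * expTwoPiI z) *
    qPoch (expTwoPiI τ) (expTwoPiI τ * (expTwoPiI z)⁻¹) with hP
  have hPd : Differentiable ℂ P :=
    (h.comp (he.const_mul _)).mul (h.comp ((he.inv expTwoPiI_ne_zero).const_mul _))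
  have hF : thetaProd τ = fun z ↦ (1 - expTwoPiI z) * P z := by
    ext z
    rw [thetaProd, qPoch_eq_mul hq (expTwoPiI z), hP, mul_assoc]
  have hde : HasDerivAt expTwoPiI (2 * (π : ℂ) * Complex.I) 0 := by
    have := ((hasDerivAt_id (0 : ℂ)).const_mul (2 * (π : ℂ) * Complex.I)).cexp
    simpa using! this
  have hd := (hde.const_sub 1).mul (hPd 0).hasDerivAt
  have hd' : HasDerivAt (thetaProd τ) (-(2 * (π : ℂ) * Complex.I) * P 0) 0 := by
    rw [hF]
    simpa [expTwoPiI_zero] using! hd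
  rw [hd'.deriv]
  have hP0 : qPoch (expTwoPiI τ) (expTwoPiI τ) ≠ 0 := by
    refine qPoch_ne_zero hq fun n hn ↦ ?_
    rw [← pow_succ] at hn
    have : ‖expTwoPiI τ‖ ^ (n + 1) = 1 := by rw [← norm_pow, hn, norm_one]
    exact (pow_lt_one₀ (norm_nonneg _) hq n.succ_ne_zero).ne this
  simpa [hP, expTwoPiI_zero, Complex.two_pi_I_ne_zero] using hP0

end thetaProd

/-! ### Even elliptic functions -/

open Filter Topology in
/-- **Liouville's theorem** for even elliptic functions: an even function which is periodic with
respect to `L.lattice`, holomorphic off the lattice, and of the form `G(z)/z²` near `0` with `G`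
holomorphic and `G(0) = 0`, is constant off the lattice. By evenness `G` vanishes doubly at `0`, so
the singularities at the lattice points are removable. -/
lemma PeriodPair.const_of_even_of_periodic (L : PeriodPair) {H G : ℂ → ℂ}
    (hper : ∀ z, ∀ l ∈ L.lattice, H (z + l) = H z) (heven : ∀ z, H (-z) = H z)
    (hdiff : ∀ z ∉ L.lattice, DifferentiableAt ℂ H z)
    (hG : ∀ᶠ z in 𝓝 0, DifferentiableAt ℂ G z) (hG0 : G 0 = 0)
    (hGH : ∀ᶠ z in 𝓝[≠] 0, G z = z ^ 2 * H z) :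
    ∃ C, ∀ z ∉ L.lattice, H z = C := by
  have hGa : AnalyticAt ℂ G 0 := Complex.analyticAt_iff_eventually_differentiableAt.mpr hG
  have hGeven : (fun z ↦ G (-z)) =ᶠ[𝓝 0] G := by
    rw [eventually_nhdsWithin_iff] at hGH
    have hneg : Tendsto (fun z : ℂ ↦ -z) (𝓝 0) (𝓝 0) := by
      simpa using (continuous_neg (G := ℂ)).tendsto 0
    filter_upwards [hGH, hneg.eventually hGH] with z h1 h2
    rcases eq_or_ne z 0 with rfl | hz
    · simp
    · rw [h1 hz, h2 (by simpa using hz), heven]; ring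
  have hG' : deriv G 0 = 0 := by
    have h := hGeven.deriv_eq
    rw [deriv_comp_neg, neg_zero] at h
    have h2 : (2 : ℂ) * deriv G 0 = 0 := by linear_combination -h
    simpa using h2
  have hds : ∀ {f : ℂ → ℂ}, AnalyticAt ℂ f 0 → AnalyticAt ℂ (dslope f 0) 0 := by
    intro f hf
    obtain ⟨s, hs, hfs⟩ := hf.exists_mem_nhds_analyticOnNhd
    exact ((Complex.differentiableOn_dslope hs).mpr hfs.differentiableOn).analyticAt hs
  set K : ℂ → ℂ := dslope (dslope G 0) 0
  have hK : AnalyticAt ℂ K 0 := hds (hds hGa)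
  have hKH : ∀ᶠ z in 𝓝[≠] 0, H z = K z := by
    filter_upwards [hGH, self_mem_nhdsWithin] with z h1 (hz : z ≠ 0)
    simp only [K, dslope_of_ne _ hz, slope, dslope_same, hG', hG0, h1, vsub_eq_sub, sub_zero,
      smul_eq_mul]
    field_simp
  classical
  set E : ℂ → ℂ := fun z ↦ if z ∈ L.lattice then K 0 else H z
  have hEper : ∀ z, ∀ l ∈ L.lattice, E (z + l) = E z := by
    intro z l hl
    have : z + l ∈ L.lattice ↔ z ∈ L.lattice := L.lattice.toAddSubgroup.add_mem_cancel_right hl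
    simp only [E, this, hper z l hl]
  have hE0 : DifferentiableAt ℂ E 0 := by
    refine hK.differentiableAt.congr_of_eventuallyEq ?_
    have hmem := L.compl_lattice_sdiff_singleton_mem_nhds 0
    rw [eventually_nhdsWithin_iff] at hKH
    filter_upwards [hKH, hmem] with z h1 h2
    rcases eq_or_ne z 0 with rfl | hz
    · simp [E]
    · have : z ∉ L.lattice := fun h ↦ h2 ⟨h, hz⟩
      simp only [E, if_neg this]
      exact h1 hz
  have hE : Differentiable ℂ E := by
    intro z
    by_cases hz : z ∈ L.lattice
    · have h : E = fun x ↦ E (x - z) := by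
        funext x
        rw [← hEper (x - z) z hz, sub_add_cancel]
      rw [h]
      exact DifferentiableAt.comp (g := E) (f := fun x ↦ x - z) z (by simpa using hE0) (by fun_prop)
    · refine (hdiff z hz).congr_of_eventuallyEq ?_
      filter_upwards [L.isClosed_lattice.isOpen_compl.mem_nhds hz] with x hx
      exact if_neg hx
  refine ⟨K 0, fun z hz ↦ ?_⟩
  have h := hE.apply_eq_apply_of_bounded
    (IsZLattice.isCompact_range_of_periodic L.lattice _ hE.continuous hEper).isBounded z 0
  simpa [E, hz] using h

/-! ### Comparison of `℘` with the theta product -/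

/-- The period pair `(τ, 1)`, for `τ` in the upper half-plane. -/
noncomputable def periodPairOf (τ : ℂ) (hτ : 0 < τ.im) : PeriodPair where
  ω₁ := τ
  ω₂ := 1
  indep := by
    refine LinearIndependent.pair_iff.mpr fun s t h ↦ ?_
    have him := congrArg Complex.im h
    have hre := congrArg Complex.re h
    have hs : s = 0 := by simpa [hτ.ne'] using him
    subst hs
    exact ⟨rfl, by simpa using hre⟩

section comparison

variable {τ : ℂ} (hτ : 0 < τ.im)
include hτ

lemma mem_periodPairOf_lattice {z : ℂ} :
    z ∈ (periodPairOf τ hτ).lattice ↔ ∃ a b : ℤ, z = a * τ + b := by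
  rw [PeriodPair.mem_lattice]
  simp [periodPairOf, eq_comm]

/-- The sum over `(a, b) ≠ 0` together with `1/z²` is Mathlib's sum over the whole lattice, whose
term at `0` is `1/z²` because `1/0 = 0`. -/
lemma wp_eq_weierstrassP (z : ℂ) : wp τ 1 z = (periodPairOf τ hτ).weierstrassP z := by
  set L := periodPairOf τ hτ
  have hsymm (p : ℤ × ℤ) : (L.latticeEquivProd.symm p : ℂ) = latticePt τ 1 p :=
    L.latticeEquiv_symm_apply p
  have h := (L.latticeEquivProd.symm.toEquiv.hasSum_iff).mpr (L.hasSum_weierstrassP z)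
  have hsum : HasSum (fun p : ℤ × ℤ ↦
      1 / (z - latticePt τ 1 p) ^ 2 - 1 / latticePt τ 1 p ^ 2) (L.weierstrassP z) := by
    refine h.congr_fun ?_
    intro p
    simp [← hsymm]
  have h2 := hsum.summable.sum_add_tsum_subtype_compl {0}
  rw [hsum.tsum_eq] at h2
  rw [← h2, wp]
  congr 1
  · simp [latticePt]
  · exact (Equiv.subtypeEquivRight (by simp)).tsum_eq
      (fun p : {p : ℤ × ℤ // p ∉ ({0} : Finset (ℤ × ℤ))} ↦
        1 / (z - latticePt τ 1 p) ^ 2 - 1 / latticePt τ 1 p ^ 2)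

/-- The quotient `F(z + b) F(z − b) / F(z)²` is an even elliptic function whose only poles are
double poles at lattice points, so it is an affine function of `℘`; it vanishes at `z = b`, hence
is a multiple of `℘(z) − ℘(b)`, and the multiple is `F(b) F(−b) / F'(0)² ≠ 0`. -/
lemma exists_mul_wp_sub_wp_eq {b : ℂ} (hb : b ∉ (periodPairOf τ hτ).lattice) :
    ∃ c : ℂ, c ≠ 0 ∧ ∀ z ∉ (periodPairOf τ hτ).lattice,
      c * (wp τ 1 z - wp τ 1 b) =
        thetaProd τ (z + b) * thetaProd τ (z - b) / thetaProd τ z ^ 2 := by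
  set L := periodPairOf τ hτ with hL
  have hFd := differentiable_thetaProd hτ
  have hF0 := thetaProd_zero hτ
  have hFne {z : ℂ} (hz : z ∉ L.lattice) : thetaProd τ z ≠ 0 :=
    thetaProd_ne_zero hτ fun m n h ↦ hz ((mem_periodPairOf_lattice hτ).mpr ⟨m, n, h⟩)
  have hd0 := deriv_thetaProd_zero_ne_zero hτ
  set R : ℂ → ℂ := fun z ↦ thetaProd τ (z + b) * thetaProd τ (z - b) / thetaProd τ z ^ 2 with hR
  have hR1 (z : ℂ) : R (z + 1) = R z := by
    simp only [hR]
    rw [add_right_comm, add_sub_right_comm, thetaProd_add_one, thetaProd_add_one,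
      thetaProd_add_one]
  have hRτ (z : ℂ) : R (z + τ) = R z := by
    have h1 := expTwoPiI_ne_zero z
    have h2 := expTwoPiI_ne_zero b
    simp only [hR]
    rw [add_right_comm, add_sub_right_comm, thetaProd_add_tau hτ, thetaProd_add_tau hτ,
      thetaProd_add_tau hτ, expTwoPiI_add, expTwoPiI_sub]
    field_simp
  have hRper : ∀ z, ∀ l ∈ L.lattice, R (z + l) = R z := by
    intro z l hl
    obtain ⟨m, n, rfl⟩ := (mem_periodPairOf_lattice hτ).mp hl
    have p1 : Function.Periodic R τ := hRτ
    have p2 : Function.Periodic R 1 := hR1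
    have := ((p1.int_mul m).add_period (p2.int_mul n)) z
    simpa using this
  have hReven (z : ℂ) : R (-z) = R z := by
    have h1 := expTwoPiI_ne_zero z
    have h2 := expTwoPiI_ne_zero b
    simp only [hR]
    rw [show -z + b = -(z - b) by ring, show -z - b = -(z + b) by ring, thetaProd_neg hτ,
      thetaProd_neg hτ, thetaProd_neg hτ, expTwoPiI_add, expTwoPiI_sub]
    field_simp
  have hRd : ∀ z ∉ L.lattice, DifferentiableAt ℂ R z := by
    intro z hz
    have hFz := pow_ne_zero 2 (hFne hz)
    have h1 : DifferentiableAt ℂ (fun x ↦ thetaProd τ (x + b)) z :=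
      (hFd.comp (by fun_prop : Differentiable ℂ fun x : ℂ ↦ x + b)) z
    have h2 : DifferentiableAt ℂ (fun x ↦ thetaProd τ (x - b)) z :=
      (hFd.comp (by fun_prop : Differentiable ℂ fun x : ℂ ↦ x - b)) z
    exact (h1.mul h2).div ((hFd z).pow 2) hFz
  -- the leading coefficient of `R` at its double pole `0`
  set c : ℂ := thetaProd τ b * thetaProd τ (-b) / deriv (thetaProd τ) 0 ^ 2 with hc
  have hb' : -b ∉ L.lattice := fun h ↦ hb (by simpa using neg_mem h)
  have hc0 : c ≠ 0 := div_ne_zero (mul_ne_zero (hFne hb) (hFne hb')) (pow_ne_zero 2 hd0)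
  set D : ℂ → ℂ := dslope (thetaProd τ) 0 with hD
  have hDd : Differentiable ℂ D := by
    rw [← differentiableOn_univ, hD, Complex.differentiableOn_dslope Filter.univ_mem]
    exact hFd.differentiableOn
  have hD0 : D 0 = deriv (thetaProd τ) 0 := dslope_same _ _
  have hDz (z : ℂ) (hz : z ≠ 0) : D z = thetaProd τ z / z := by
    rw [hD, dslope_of_ne _ hz, slope_def_field, hF0, sub_zero, sub_zero]
  have hPd : ∀ᶠ z in nhds (0 : ℂ), DifferentiableAt ℂ (L.weierstrassPExcept 0) z := by
    filter_upwards [L.compl_lattice_sdiff_singleton_mem_nhds 0] with z hz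
    exact (L.differentiableOn_weierstrassPExcept 0).differentiableAt
      (L.isOpen_compl_lattice_sdiff.mem_nhds hz)
  have hP (z : ℂ) : L.weierstrassP z = L.weierstrassPExcept 0 z + 1 / z ^ 2 := by
    simpa using (L.weierstrassPExcept_add 0 z).symm
  obtain ⟨C, hC⟩ := L.const_of_even_of_periodic (H := fun z ↦ R z - c * L.weierstrassP z)
    (G := fun z ↦ thetaProd τ (z + b) * thetaProd τ (z - b) / D z ^ 2 -
      c * (z ^ 2 * L.weierstrassPExcept 0 z + 1))
    (fun z l hl ↦ by
      simp only [hRper z l hl]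
      rw [L.weierstrassP_add_coe z ⟨l, hl⟩])
    (fun z ↦ by simp only [hReven, L.weierstrassP_neg])
    (fun z hz ↦ (hRd z hz).sub
      ((L.differentiableOn_weierstrassP.differentiableAt
        (L.isClosed_lattice.isOpen_compl.mem_nhds hz)).const_mul c))
    (by
      have hDne : ∀ᶠ z in nhds (0 : ℂ), D z ≠ 0 :=
        hDd.continuous.continuousAt.eventually_ne (by rwa [hD0])
      filter_upwards [hDne, hPd] with z hz hPz
      have h1 : DifferentiableAt ℂ (fun x ↦ thetaProd τ (x + b)) z :=
        (hFd.comp (by fun_prop : Differentiable ℂ fun x : ℂ ↦ x + b)) z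
      have h2 : DifferentiableAt ℂ (fun x ↦ thetaProd τ (x - b)) z :=
        (hFd.comp (by fun_prop : Differentiable ℂ fun x : ℂ ↦ x - b)) z
      refine ((h1.mul h2).div ((hDd z).pow 2) (pow_ne_zero 2 hz)).sub ?_
      fun_prop)
    (by simp [hD0, hc])
    (by
      filter_upwards [self_mem_nhdsWithin] with z (hz : z ≠ 0)
      rw [hDz z hz, hP]
      simp only [hR]
      field_simp)
  refine ⟨c, hc0, fun z hz ↦ ?_⟩
  have h1 := hC z hz
  have h2 := hC b hb
  have hRb : R b = 0 := by simp [hR, hF0]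
  rw [wp_eq_weierstrassP hτ, wp_eq_weierstrassP hτ]
  change c * (L.weierstrassP z - L.weierstrassP b) = R z
  linear_combination h2 - h1 - hRb

end comparison

/-! ### Siegel functions -/

/-- A Siegel function is the theta product at `z = rτ + s` times its exponential prefactor. -/
lemma siegel_eq_thetaProd {τ : ℂ} (hτ : 0 < τ.im) (r s : ℚ) :
    siegel r s τ = -qpow τ ((1/2) * ((r : ℝ) ^ 2 - (r : ℝ) + 1/6)) *
      Complex.exp ((π : ℂ) * Complex.I * (s : ℂ) * ((r : ℂ) - 1)) *
      thetaProd τ (r * τ + s) := by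
  have hq := norm_expTwoPiI_lt_one hτ
  have hqp (x : ℝ) : qpow τ x = expTwoPiI (x * τ) := by
    rw [qpow, expTwoPiI]; congr 1; ring
  have hs : Complex.exp (2 * (π : ℂ) * Complex.I * (s : ℂ)) = expTwoPiI s := rfl
  have hs' : Complex.exp (-(2 * (π : ℂ) * Complex.I * (s : ℂ))) = (expTwoPiI s)⁻¹ := by
    rw [Complex.exp_neg]; rfl
  set w := expTwoPiI (r * τ + s) with hw
  set q := expTwoPiI τ with hqdef
  have h1 (n : ℕ) : qpow τ ((n + 1 : ℝ) + (r : ℝ)) * expTwoPiI s = q ^ n * (q * w) := by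
    rw [hqp, hw, hqdef, ← expTwoPiI_nat_mul, ← expTwoPiI_add, ← expTwoPiI_add, ← expTwoPiI_add]
    congr 1; push_cast; ring
  have h2 (n : ℕ) : qpow τ ((n + 1 : ℝ) - (r : ℝ)) * (expTwoPiI s)⁻¹ = q ^ n * (q * w⁻¹) := by
    rw [hqp, hw, hqdef, ← expTwoPiI_nat_mul, ← expTwoPiI_neg, ← expTwoPiI_neg, ← expTwoPiI_add,
      ← expTwoPiI_add, ← expTwoPiI_add]
    congr 1; push_cast; ring
  have h0 : qpow τ (r : ℝ) * expTwoPiI s = w := by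
    rw [hqp, hw, ← expTwoPiI_add]; congr 1
  rw [siegel, hs, hs', h0]
  simp only [h1, h2, sub_eq_add_neg (1 : ℂ)]
  rw [Multipliable.tprod_mul (multipliable_qPoch hq _) (multipliable_qPoch hq _), thetaProd, ← hw,
    qPoch_eq_mul hq w]
  simp only [qPoch, sub_eq_add_neg]
  ring

/-- In `g_{[r,s]} g_{[−r,s]} / g_{[0,s]}²` the exponential prefactors depend on `r` only: those in
`s` cancel. -/
lemma siegel_mul_siegel_neg {τ : ℂ} (hτ : 0 < τ.im) (r s : ℚ) :
    siegel r s τ * siegel (-r) s τ * thetaProd τ s ^ 2 =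
      qpow τ ((r : ℝ) ^ 2) * (thetaProd τ (s + r * τ) * thetaProd τ (s - r * τ)) *
        siegel 0 s τ ^ 2 := by
  rw [siegel_eq_thetaProd hτ, siegel_eq_thetaProd hτ, siegel_eq_thetaProd hτ]
  have e1 : ((r : ℚ) : ℂ) * τ + s = s + r * τ := by ring
  have e2 : ((-r : ℚ) : ℂ) * τ + s = s - r * τ := by push_cast; ring
  have e3 : ((0 : ℚ) : ℂ) * τ + s = s := by push_cast; ring
  rw [e1, e2, e3]
  have hexp : qpow τ ((1/2) * ((r : ℝ) ^ 2 - (r : ℝ) + 1/6)) *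
      Complex.exp ((π : ℂ) * Complex.I * (s : ℂ) * ((r : ℂ) - 1)) *
      (qpow τ ((1/2) * (((-r : ℚ) : ℝ) ^ 2 - ((-r : ℚ) : ℝ) + 1/6)) *
      Complex.exp ((π : ℂ) * Complex.I * (s : ℂ) * (((-r : ℚ) : ℂ) - 1))) =
      qpow τ ((r : ℝ) ^ 2) * (qpow τ ((1/2) * (((0 : ℚ) : ℝ) ^ 2 - ((0 : ℚ) : ℝ) + 1/6)) *
      Complex.exp ((π : ℂ) * Complex.I * (s : ℂ) * (((0 : ℚ) : ℂ) - 1))) ^ 2 := by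
    simp only [qpow, pow_two, ← Complex.exp_add]
    congr 1
    push_cast
    ring
  linear_combination (thetaProd τ (s + r * τ) * thetaProd τ (s - r * τ) * thetaProd τ s ^ 2) * hexp

theorem weierstrass_unit_eq_siegel_product
    (m n : ℕ) (hm : 2 ≤ m) (hn : 1 ≤ n) (τ : UpperHalfPlane) :
    hweier m n τ =
      siegel (1 / (m : ℚ)) (1 / (m * n : ℚ)) τ * siegel (-(1 / (m : ℚ))) (1 / (m * n : ℚ)) τ *
          siegel 0 (1 / (m : ℚ)) τ ^ 2 /
        (siegel (1 / (m : ℚ)) (1 / (m : ℚ)) τ * siegel (-(1 / (m : ℚ))) (1 / (m : ℚ)) τ *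
          siegel 0 (1 / (m * n : ℚ)) τ ^ 2) := by
  obtain ⟨τ, hτ⟩ := τ
  change 0 < τ.im at hτ
  change hweier m n τ = siegel _ _ τ * siegel _ _ τ * siegel _ _ τ ^ 2 /
    (siegel _ _ τ * siegel _ _ τ * siegel _ _ τ ^ 2)
  set r : ℚ := 1 / (m : ℚ) with hr
  set s : ℚ := 1 / (m * n : ℚ) with hs
  -- a lattice point `xτ + y` with `x`, `y` rational has `x`, `y` integral
  have hmem {x y : ℚ} (h : (x : ℂ) * τ + y ∈ (periodPairOf τ hτ).lattice) :
      ∃ a b : ℤ, x = a ∧ y = b := by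
    obtain ⟨a, b, h⟩ := (mem_periodPairOf_lattice hτ).mp h
    have hx : (x : ℝ) = a := by simpa [hτ.ne'] using congrArg Complex.im h
    have hy : (y : ℝ) = b := by simpa [hx] using congrArg Complex.re h
    exact ⟨a, b, by exact_mod_cast hx, by exact_mod_cast hy⟩
  have hint {k : ℕ} (hk : 2 ≤ k) (a : ℤ) : (1 : ℚ) / k ≠ a := by
    intro h
    have hk' : (k : ℚ) ≠ 0 := by positivity
    rw [div_eq_iff hk'] at h
    have h' : a * (k : ℤ) = 1 := by exact_mod_cast h.symm
    have := Int.isUnit_iff.mp (IsUnit.of_mul_eq_one_right _ h')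
    omega
  have hmn : 2 ≤ m * n := by nlinarith
  have hs' : s = 1 / ((m * n : ℕ) : ℚ) := by push_cast; rfl
  have hb : (r : ℂ) * τ ∉ (periodPairOf τ hτ).lattice := fun h ↦ by
    obtain ⟨a, -, ha, -⟩ := hmem (x := r) (y := 0) (by simpa using h)
    exact hint hm a ha
  have hzr : (r : ℂ) ∉ (periodPairOf τ hτ).lattice := fun h ↦ by
    obtain ⟨-, a, -, ha⟩ := hmem (x := 0) (y := r) (by simpa using h)
    exact hint hm a ha
  have hzs : (s : ℂ) ∉ (periodPairOf τ hτ).lattice := fun h ↦ by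
    obtain ⟨-, a, -, ha⟩ := hmem (x := 0) (y := s) (by simpa using h)
    exact hint hmn a (hs' ▸ ha)
  have hFne {z : ℂ} (hz : z ∉ (periodPairOf τ hτ).lattice) : thetaProd τ z ≠ 0 :=
    thetaProd_ne_zero hτ fun m n h ↦ hz ((mem_periodPairOf_lattice hτ).mpr ⟨m, n, h⟩)
  have hqne (x : ℝ) : qpow τ x ≠ 0 := Complex.exp_ne_zero _
  have hg0 {y : ℚ} (hy : (y : ℂ) ∉ (periodPairOf τ hτ).lattice) : siegel 0 y τ ≠ 0 := by
    rw [siegel_eq_thetaProd hτ]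
    refine mul_ne_zero (mul_ne_zero (neg_ne_zero.mpr (hqne _)) (Complex.exp_ne_zero _)) ?_
    simpa using hFne hy
  obtain ⟨c, hc, hcw⟩ := exists_mul_wp_sub_wp_eq hτ hb
  -- `q^{r²} · c · (℘(y) − ℘(rτ))` is the Siegel quotient `g_{[r,y]} g_{[−r,y]} / g_{[0,y]}²`
  have key {y : ℚ} (hy : (y : ℂ) ∉ (periodPairOf τ hτ).lattice) :
      siegel r y τ * siegel (-r) y τ = qpow τ ((r : ℝ) ^ 2) * c *
        (wprs 0 y τ - wprs r 0 τ) * siegel 0 y τ ^ 2 := by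
    have h1 := siegel_mul_siegel_neg hτ r y
    have h2 := hcw y hy
    have hF := pow_ne_zero 2 (hFne hy)
    rw [eq_div_iff hF] at h2
    have e : wprs 0 y τ - wprs r 0 τ = wp τ 1 y - wp τ 1 (r * τ) := by simp [wprs]
    refine mul_right_cancel₀ hF ?_
    rw [h1, e, ← h2]
    ring
  have hqc := mul_ne_zero (hqne ((r : ℝ) ^ 2)) hc
  have hgr := pow_ne_zero 2 (hg0 hzr)
  have hgs := pow_ne_zero 2 (hg0 hzs)
  rw [key hzr, key hzs, hweier]
  rw [show qpow τ ((r : ℝ) ^ 2) * c * (wprs 0 s τ - wprs r 0 τ) * siegel 0 s τ ^ 2 *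
      siegel 0 r τ ^ 2 = (wprs 0 s τ - wprs r 0 τ) *
        (qpow τ ((r : ℝ) ^ 2) * c * siegel 0 s τ ^ 2 * siegel 0 r τ ^ 2) by ring,
    show qpow τ ((r : ℝ) ^ 2) * c * (wprs 0 r τ - wprs r 0 τ) * siegel 0 r τ ^ 2 *
      siegel 0 s τ ^ 2 = (wprs 0 r τ - wprs r 0 τ) *
        (qpow τ ((r : ℝ) ^ 2) * c * siegel 0 s τ ^ 2 * siegel 0 r τ ^ 2) by ring,
    mul_div_mul_right _ _ (mul_ne_zero (mul_ne_zero hqc hgs) hgr)]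
end

section
/- Let m ≥ 2 and n ≥ 1 be integers and let t be an integer coprime to mn with t ≢ 1 (mod mn) and t ≢ −1 (mod mn). Then for every τ in the upper half-plane ℍ: ( ℘_{[0, t/mn]}(τ) − ℘_{[0, 1/mn]}(τ) ) / ( ℘_{[0, 1/m]}(τ) − ℘_{[1/m, 0]}(τ) ) = g_{[0, (t+1)/mn]}(τ) · g_{[0, (t−1)/mn]}(τ) · g_{[0, 1/m]}(τ)² · g_{[1/m, 0]}(τ)² / ( g_{[1/m, 1/m]}(τ) · g_{[−1/m, 1/m]}(τ) · g_{[0, t/mn]}(τ)² · g_{[0, 1/mn]}(τ)² ). -/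
/-!
The identity is the quotient of two instances of
`℘(z) - ℘(w) = -θ'(0)² · θ(z + w) θ(z - w) / (θ(z)² θ(w)²)` (`wp_sub_wp`), where
`θ(z) = (e^{πiz} - e^{-πiz}) ∏_{n ≥ 1} (1 - qⁿu)(1 - qⁿ/u)` with `u = e^{2πiz}`.

That formula comes from Liouville's theorem. The function `θ` is entire and odd, is nonzero off the
lattice, and satisfies `θ(z + 1) = -θ(z)` and `θ(z + τ) = -e^{-πiτ - 2πiz} θ(z)`. Hence, for fixed
`w`, the quotient `θ(z + w) θ(z - w) / θ(z)²` is an even elliptic function of `z` whose only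
possible poles are at lattice points. Its polar part at `0` is `c / z²` with `c = -θ(w)² / θ'(0)²`,
evenness ruling out a term in `1 / z`. Subtracting `c ℘(z)` leaves an elliptic function with
removable singularities (`exists_extension`), which is therefore constant, and the constant is
found at `z = w`, where the quotient vanishes (`thetaQuot_eq`).

Finally `g_{[r,s]}(τ) = e^{πiτ/6 + πi r(rτ + s)} θ(rτ + s)` (`siegel_eq`). The exponents `r(rτ + s)`
form a quadratic form in `(r, s)`, so by the parallelogram law they cancel in
`g_{a+b} g_{a-b} / (g_a² g_b²)`. Every difference of `℘`-values is thus this Siegel quotient times a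
constant depending only on `τ` (`wprs_sub_wprs`).
-/

open scoped Real

open PeriodPair Topology

/-! ### The infinite product `∏ (1 - qⁿx)` -/

/-- The product `∏_{n ≥ 1} (1 - qⁿ x)`, with the index shifted to start at `0`. -/
noncomputable def qProd (q x : ℂ) : ℂ := ∏' n : ℕ, (1 - q ^ (n + 1) * x)

lemma summable_qProd {q : ℂ} (hq : ‖q‖ < 1) (x : ℂ) :
    Summable fun n : ℕ ↦ ‖-(q ^ (n + 1) * x)‖ := by
  simp only [norm_neg, norm_mul, norm_pow]
  exact ((summable_nat_add_iff 1).mpr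
    (summable_geometric_of_lt_one (norm_nonneg _) hq)).mul_right _

lemma multipliable_qProd {q : ℂ} (hq : ‖q‖ < 1) (x : ℂ) :
    Multipliable fun n : ℕ ↦ (1 - q ^ (n + 1) * x) := by
  simpa only [sub_eq_add_neg] using multipliable_one_add_of_summable (summable_qProd hq x)

lemma differentiable_qProd {q : ℂ} (hq : ‖q‖ < 1) : Differentiable ℂ (qProd q) := by
  intro x
  have hu : Summable fun n : ℕ ↦ ‖q‖ ^ (n + 1) * (‖x‖ + 1) :=
    ((summable_nat_add_iff 1).mpr
      (summable_geometric_of_lt_one (norm_nonneg _) hq)).mul_right _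
  have h := Summable.hasProdLocallyUniformlyOn_nat_one_add (R := ℂ)
    (f := fun n y ↦ -(q ^ (n + 1) * y)) (K := Metric.ball 0 (‖x‖ + 1)) Metric.isOpen_ball hu
    (.of_forall fun n y hy ↦ by
      rw [norm_neg, norm_mul, norm_pow]
      gcongr
      exact (mem_ball_zero_iff.mp hy).le) (fun n ↦ by fun_prop)
  have hd := h.differentiableOn (.of_forall fun s ↦ by
      simpa [Finset.prod_fn] using DifferentiableOn.finsetProd (fun _ _ ↦ by fun_prop))
    Metric.isOpen_ball
  have := hd.differentiableAt (Metric.isOpen_ball.mem_nhds (x := x) (by simp))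
  simpa only [← sub_eq_add_neg] using! this

lemma qProd_ne_zero {q x : ℂ} (hq : ‖q‖ < 1) (hx : ∀ n : ℕ, q ^ (n + 1) * x ≠ 1) :
    qProd q x ≠ 0 := by
  have := tprod_one_add_ne_zero_of_summable (f := fun n : ℕ ↦ -(q ^ (n + 1) * x))
    (fun n ↦ by rw [← sub_eq_add_neg, sub_ne_zero]; exact (hx n).symm) (summable_qProd hq x)
  simpa only [qProd, ← sub_eq_add_neg] using this

lemma qProd_eq {q : ℂ} (hq : ‖q‖ < 1) (x : ℂ) :
    qProd q x = (1 - q * x) * qProd q (q * x) := by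
  rw [qProd, tprod_eq_zero_mul' ?_, qProd]
  · simp only [zero_add, pow_one]
    congr! 4 with n
    ring
  · convert multipliable_qProd hq (q * x) using 3 with n
    ring

/-! ### The theta function -/

/-- The odd theta function `(e^{πiz} - e^{-πiz}) ∏_{n ≥ 1} (1 - qⁿu)(1 - qⁿ/u)`, where
`q = e^{2πiτ}` and `u = e^{2πiz}`. Up to a factor depending only on `τ`, it is Jacobi's `θ₁`. -/
noncomputable def theta (τ z : ℂ) : ℂ :=
  (Complex.exp (π * Complex.I * z) - Complex.exp (-(π * Complex.I * z))) *
    (qProd (Complex.exp (2 * π * Complex.I * τ)) (Complex.exp (2 * π * Complex.I * z)) *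
      qProd (Complex.exp (2 * π * Complex.I * τ)) (Complex.exp (-(2 * π * Complex.I * z))))

lemma norm_q_lt_one (τ : UpperHalfPlane) : ‖Complex.exp (2 * π * Complex.I * τ)‖ < 1 := by
  simpa [Function.Periodic.qParam] using UpperHalfPlane.norm_qParam_lt_one 1 τ

lemma differentiable_theta (τ : UpperHalfPlane) : Differentiable ℂ (theta τ) := by
  have := differentiable_qProd (norm_q_lt_one τ)
  unfold theta
  fun_prop

lemma theta_neg (τ z : ℂ) : theta τ (-z) = -theta τ z := by
  simp only [theta, mul_neg, neg_neg]
  ring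

lemma theta_add_one (τ z : ℂ) : theta τ (z + 1) = -theta τ z := by
  simp only [theta, mul_add, mul_one, neg_add, Complex.exp_add, Complex.exp_pi_mul_I,
    Complex.exp_two_pi_mul_I, Complex.exp_neg]
  norm_num
  ring

lemma theta_add_self (τ : UpperHalfPlane) (z : ℂ) :
    theta τ (z + τ) =
      -Complex.exp (-(π * Complex.I * τ) - 2 * π * Complex.I * z) * theta τ z := by
  have hq := norm_q_lt_one τ
  set q := Complex.exp (2 * π * Complex.I * τ) with hqd
  have e1 : Complex.exp (2 * π * Complex.I * (z + τ)) = q * Complex.exp (2 * π * Complex.I * z) := by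
    rw [hqd, ← Complex.exp_add]; ring_nf
  have e2 : q * Complex.exp (-(2 * π * Complex.I * (z + τ))) =
      Complex.exp (-(2 * π * Complex.I * z)) := by
    rw [hqd, ← Complex.exp_add]; ring_nf
  have h1 := qProd_eq hq (Complex.exp (2 * π * Complex.I * z))
  have h2 := qProd_eq hq (Complex.exp (-(2 * π * Complex.I * (z + τ))))
  rw [e2] at h2
  simp only [theta, ← hqd, e1]
  rw [h1, h2]
  -- The factors `1 - q u` and `1 - 1 / u` are multiplied through rather than divided by, since
  -- either may vanish.
  have e3 : (Complex.exp (π * Complex.I * (z + τ)) - Complex.exp (-(π * Complex.I * (z + τ)))) *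
      (1 - Complex.exp (-(2 * π * Complex.I * z))) =
      -Complex.exp (-(π * Complex.I * τ) - 2 * π * Complex.I * z) *
      (Complex.exp (π * Complex.I * z) - Complex.exp (-(π * Complex.I * z))) *
      (1 - q * Complex.exp (2 * π * Complex.I * z)) := by
    simp only [hqd, mul_sub, sub_mul, mul_one, neg_mul, ← Complex.exp_add]
    ring_nf
  linear_combination (qProd q (q * Complex.exp (2 * π * Complex.I * z)) *
    qProd q (Complex.exp (-(2 * π * Complex.I * z)))) * e3

/-- The lattice `[τ, 1] = ℤτ + ℤ`, as a pair of periods. -/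
noncomputable def tauLattice (τ : UpperHalfPlane) : PeriodPair where
  ω₁ := τ
  ω₂ := 1
  indep := by
    rw [LinearIndependent.pair_iff]
    intro s t h
    have him := congr_arg Complex.im h
    have hre := congr_arg Complex.re h
    have : s = 0 := by simpa [τ.im_ne_zero] using him
    subst this
    simpa using hre

lemma theta_ne_zero (τ : UpperHalfPlane) {z : ℂ} (hz : z ∉ (tauLattice τ).lattice) :
    theta τ z ≠ 0 := by
  have key (a b : ℤ) : z ≠ a * τ + b := fun h ↦
    hz (mem_lattice.mpr ⟨a, b, by simp [tauLattice, h]⟩)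
  have hpi : (2 * π * Complex.I : ℂ) ≠ 0 := Complex.two_pi_I_ne_zero
  refine mul_ne_zero ?_ (mul_ne_zero (qProd_ne_zero (norm_q_lt_one τ) fun n h ↦ ?_)
    (qProd_ne_zero (norm_q_lt_one τ) fun n h ↦ ?_))
  · rw [sub_ne_zero, Ne, Complex.exp_eq_exp_iff_exists_int]
    rintro ⟨n, hn⟩
    refine key 0 n (mul_left_cancel₀ hpi ?_)
    push_cast
    linear_combination hn
  · rw [← Complex.exp_nat_mul, ← Complex.exp_add, Complex.exp_eq_one_iff] at h
    obtain ⟨k, hk⟩ := h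
    refine key (-(n + 1)) k (mul_left_cancel₀ hpi ?_)
    push_cast at hk ⊢
    linear_combination hk
  · rw [← Complex.exp_nat_mul, ← Complex.exp_add, Complex.exp_eq_one_iff] at h
    obtain ⟨k, hk⟩ := h
    refine key (n + 1) (-k) (mul_left_cancel₀ hpi ?_)
    push_cast at hk ⊢
    linear_combination -hk

lemma deriv_theta_zero_ne (τ : UpperHalfPlane) : deriv (theta τ) 0 ≠ 0 := by
  have hq := norm_q_lt_one τ
  set q := Complex.exp (2 * π * Complex.I * τ) with hqd
  have hF := differentiable_qProd hq
  have h1 : HasDerivAt (fun z : ℂ ↦ Complex.exp (π * Complex.I * z) -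
      Complex.exp (-(π * Complex.I * z))) (2 * π * Complex.I) 0 := by
    have ha : HasDerivAt (fun z : ℂ ↦ π * Complex.I * z) (π * Complex.I) 0 := by
      simpa using (hasDerivAt_id (0 : ℂ)).const_mul (π * Complex.I : ℂ)
    refine (ha.cexp.sub ha.neg.cexp).congr_deriv ?_
    simp only [Pi.neg_apply, mul_zero, neg_zero, Complex.exp_zero]
    ring
  have h2 : DifferentiableAt ℂ (fun z : ℂ ↦ qProd q (Complex.exp (2 * π * Complex.I * z)) *
      qProd q (Complex.exp (-(2 * π * Complex.I * z)))) 0 := by fun_prop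
  have h3 := (h1.mul h2.hasDerivAt).deriv
  have h4 : deriv (theta τ) 0 = 2 * π * Complex.I * (qProd q 1 * qProd q 1) := by
    refine Eq.trans ?_ (h3.trans ?_)
    · rfl
    · simp
  have h5 : qProd q 1 ≠ 0 := qProd_ne_zero hq fun n h ↦ by
    have := congr_arg norm h
    rw [mul_one, norm_pow, norm_one] at this
    exact (pow_lt_one₀ (norm_nonneg _) hq n.succ_ne_zero).ne this
  rw [h4]
  exact mul_ne_zero Complex.two_pi_I_ne_zero (mul_ne_zero h5 h5)

/-! ### The Weierstrass function as a theta quotient -/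

/-- `wp` is Mathlib's `℘`, which includes the lattice point `0` in its sum: the corresponding term
is `1 / z ^ 2` because `1 / 0 ^ 2 = 0`. The identity thus holds for all `z`. -/
lemma wp_eq_weierstrassP_s12 (τ : UpperHalfPlane) (z : ℂ) :
    wp τ 1 z = ℘[tauLattice τ] z := by
  have hs := (tauLattice τ).hasSum_weierstrassP z
  rw [← (tauLattice τ).latticeEquivProd.symm.toEquiv.hasSum_iff] at hs
  have hpt (p : ℤ × ℤ) : ((tauLattice τ).latticeEquivProd.symm p : ℂ) = latticePt τ 1 p := by
    rw [latticeEquiv_symm_apply]; rfl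
  simp only [Function.comp_def, LinearEquiv.coe_toEquiv, hpt] at hs
  have h := hs.summable.tsum_subtype_add_tsum_subtype_compl {0}
  rw [hs.tsum_eq, tsum_singleton (0 : ℤ × ℤ)
    (fun p ↦ 1 / (z - latticePt τ 1 p) ^ 2 - 1 / latticePt τ 1 p ^ 2)] at h
  rw [← h, wp]
  congr 1
  simp [latticePt]

lemma periodic_of_add_one_of_add_self {τ : UpperHalfPlane} {f : ℂ → ℂ}
    (h1 : ∀ z, f (z + 1) = f z) (hτ : ∀ z, f (z + τ) = f z) :
    ∀ l ∈ (tauLattice τ).lattice, ∀ z, f (z + l) = f z := by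
  intro l hl
  obtain ⟨a, b, rfl⟩ := mem_lattice.mp hl
  have p1 : Function.Periodic f 1 := h1
  have pτ : Function.Periodic f τ := hτ
  intro z
  have := ((pτ.int_mul a).add_period (p1.int_mul b)) z
  simpa [tauLattice] using this

/-- The quotient `θ(z + w) θ(z - w) / θ(z)²`, regarded as a function of `z`. -/
noncomputable def thetaQuot (τ : UpperHalfPlane) (w z : ℂ) : ℂ :=
  theta τ (z + w) * theta τ (z - w) / theta τ z ^ 2

lemma thetaQuot_add_lattice (τ : UpperHalfPlane) (w : ℂ) :
    ∀ l ∈ (tauLattice τ).lattice, ∀ z, thetaQuot τ w (z + l) = thetaQuot τ w z := by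
  apply periodic_of_add_one_of_add_self
  · intro z
    rw [thetaQuot, add_right_comm, add_sub_right_comm, theta_add_one, theta_add_one, theta_add_one,
      thetaQuot]
    ring
  · intro z
    rw [thetaQuot, add_right_comm, add_sub_right_comm, theta_add_self, theta_add_self,
      theta_add_self, thetaQuot]
    have e : Complex.exp (-(π * Complex.I * τ) - 2 * π * Complex.I * (z + w)) *
        Complex.exp (-(π * Complex.I * τ) - 2 * π * Complex.I * (z - w)) =
        Complex.exp (-(π * Complex.I * τ) - 2 * π * Complex.I * z) ^ 2 := by
      rw [← Complex.exp_add, ← Complex.exp_nat_mul]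
      congr 1
      push_cast
      ring
    rw [mul_pow, neg_sq, ← e]
    rw [← mul_div_mul_left (theta τ (z + w) * theta τ (z - w)) (theta τ z ^ 2)
      (mul_ne_zero (Complex.exp_ne_zero (-(π * Complex.I * τ) - 2 * π * Complex.I * (z + w)))
        (Complex.exp_ne_zero (-(π * Complex.I * τ) - 2 * π * Complex.I * (z - w))))]
    ring

lemma deriv_zero_of_even {f : ℂ → ℂ} (h : ∀ z, f (-z) = f z) : deriv f 0 = 0 := by
  have := deriv_comp_neg f 0
  simp only [h, neg_zero] at this
  linear_combination this / 2

/-- With `c = -θ(w)² / θ'(0)²`, the function `θ(z + w) θ(z - w) / θ(z)² - c ℘(z)` has a removable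
singularity at `0`. -/
lemma exists_extension (τ : UpperHalfPlane) (w : ℂ) :
    ∃ H : ℂ → ℂ, DifferentiableAt ℂ H 0 ∧ ∀ z ∉ (tauLattice τ).lattice,
      H z = thetaQuot τ w z + (theta τ w / deriv (theta τ) 0) ^ 2 * ℘[tauLattice τ] z := by
  set L := tauLattice τ
  set c := -(theta τ w / deriv (theta τ) 0) ^ 2 with hc
  have hθ := differentiable_theta τ
  have hθ0 : theta τ 0 = 0 := by simp [theta]
  set ψ := dslope (theta τ) 0 with hψ
  have hψd : Differentiable ℂ ψ := by
    rw [← differentiableOn_univ, hψ, Complex.differentiableOn_dslope Filter.univ_mem]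
    exact hθ.differentiableOn
  have hψ0 : ψ 0 = deriv (theta τ) 0 := dslope_same _ _
  have hψz {z : ℂ} : theta τ z = z * ψ z := by
    have := sub_smul_dslope (theta τ) 0 z
    simpa [hθ0] using this.symm
  have hψneg (z : ℂ) : ψ (-z) = ψ z := by
    rcases eq_or_ne z 0 with rfl | hz
    · simp
    · have := theta_neg τ z
      rw [hψz, hψz] at this
      apply mul_left_cancel₀ hz
      linear_combination -this
  -- `k z = z² · thetaQuot τ w z` off the lattice, and `k` is even and analytic at `0`; hence
  -- `(k z - k 0) / z²` extends analytically to `0` as an iterated `dslope`.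
  set k : ℂ → ℂ := fun z ↦ theta τ (z + w) * theta τ (z - w) / ψ z ^ 2 with hk
  have hk0 : k 0 = c := by
    simp only [hk, zero_add, zero_sub, theta_neg, hψ0, hc]
    ring
  have hkeven (z : ℂ) : k (-z) = k z := by
    simp only [hk, hψneg]
    rw [show -z + w = -(z - w) by ring, show -z - w = -(z + w) by ring, theta_neg, theta_neg]
    ring
  have hU : {z : ℂ | ψ z ≠ 0} ∈ 𝓝 (0 : ℂ) :=
    hψd.continuous.continuousAt.eventually_ne (hψ0 ▸ deriv_theta_zero_ne τ)
  have hkd : DifferentiableOn ℂ k {z : ℂ | ψ z ≠ 0} := by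
    intro z hz
    have : DifferentiableAt ℂ k z := by
      have h2 : ψ z ^ 2 ≠ 0 := pow_ne_zero 2 hz
      simp only [hk]
      fun_prop (disch := assumption)
    exact this.differentiableWithinAt
  have hs1 := (Complex.differentiableOn_dslope hU).mpr hkd
  have hs2 := ((Complex.differentiableOn_dslope hU).mpr hs1).differentiableAt hU
  have hE : DifferentiableAt ℂ ℘[L - (0 : ℂ)] 0 := (L.analyticAt_weierstrassPExcept 0).differentiableAt
  refine ⟨fun z ↦ dslope (dslope k 0) 0 z - c * ℘[L - (0 : ℂ)] z, hs2.sub (hE.const_mul c), ?_⟩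
  intro z hz
  have hz0 : z ≠ 0 := fun h ↦ hz (h ▸ L.lattice.zero_mem)
  have hP := L.weierstrassPExcept_add 0 z
  simp only [ZeroMemClass.coe_zero] at hP
  rw [← hP]
  simp only [dslope_of_ne _ hz0, slope_def_field, dslope_same, deriv_zero_of_even hkeven, hk0]
  have hψne : ψ z ≠ 0 := fun h ↦ theta_ne_zero τ hz (by rw [hψz, h, mul_zero])
  rw [thetaQuot, hψz (z := z)]
  simp only [hk]
  rw [show (theta τ w / deriv (theta τ) 0) ^ 2 = -c by rw [hc, neg_neg]]
  field_simp
  ring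

/-- For fixed `w`, the difference `θ(z + w) θ(z - w) / θ(z)² - c ℘(z)` extends to a bounded entire
function, so it takes the same value at `z` as at `w`. -/
lemma thetaQuot_eq (τ : UpperHalfPlane) {z w : ℂ} (hz : z ∉ (tauLattice τ).lattice)
    (hw : w ∉ (tauLattice τ).lattice) :
    thetaQuot τ w z =
      -(theta τ w / deriv (theta τ) 0) ^ 2 * (℘[tauLattice τ] z - ℘[tauLattice τ] w) := by
  classical
  obtain ⟨H, hH, hHz⟩ := exists_extension τ w
  set L := tauLattice τ with hL
  -- The value `H 0` at every lattice point keeps `E` periodic, so differentiability at `0`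
  -- carries over to the whole lattice.
  set E : ℂ → ℂ := fun z ↦ if z ∈ L.lattice then H 0 else H z with hEdef
  have hEper (z l : ℂ) (hl : l ∈ L.lattice) : E (z + l) = E z := by
    have hiff : z + l ∈ L.lattice ↔ z ∈ L.lattice :=
      L.lattice.toAddSubgroup.add_mem_cancel_right (y := z) hl
    by_cases h : z ∈ L.lattice
    · simp only [hEdef, hiff, h, if_true]
    · have hl' := L.weierstrassP_add_coe z ⟨l, hl⟩
      simp only at hl'
      simp only [hEdef, hiff, h, if_false]
      rw [hHz _ (hiff.not.mpr h), hHz _ h, thetaQuot_add_lattice τ w l hl, hl']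
  have hE0 : DifferentiableAt ℂ E 0 := by
    refine hH.congr_of_eventuallyEq ?_
    filter_upwards [L.compl_lattice_sdiff_singleton_mem_nhds 0] with z hz
    by_cases h : z ∈ L.lattice
    · have : z = 0 := by
        by_contra h0
        exact hz ⟨h, h0⟩
      simp [hEdef, this]
    · simp [hEdef, h]
  have hEd : Differentiable ℂ E := by
    intro x
    by_cases hx : x ∈ L.lattice
    · have he : E = fun z ↦ E (z - x) := by
        ext z
        rw [← hEper (z - x) x hx, sub_add_cancel]
      rw [he]
      have hE0' : DifferentiableAt ℂ E (x - x) := by rwa [sub_self]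
      exact hE0'.comp x (f := fun z ↦ z - x) (by fun_prop)
    · have hθ := differentiable_theta τ
      have hP := (L.analyticOnNhd_weierstrassP x hx).differentiableAt
      have h2 : theta τ x ^ 2 ≠ 0 := pow_ne_zero 2 (theta_ne_zero τ hx)
      have : DifferentiableAt ℂ (fun z ↦ theta τ (z + w) * theta τ (z - w) / theta τ z ^ 2 +
          (theta τ w / deriv (theta τ) 0) ^ 2 * ℘[L] z) x := by
        fun_prop (disch := assumption)
      refine this.congr_of_eventuallyEq ?_
      filter_upwards [L.isClosed_lattice.isOpen_compl.mem_nhds hx] with z hz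
      have hz' : z ∉ L.lattice := hz
      simp only [hEdef, hz', if_false, hHz z hz', thetaQuot]
  have hconst := hEd.apply_eq_apply_of_bounded (IsZLattice.isCompact_range_of_periodic L.lattice _
    hEd.continuous fun z l hl ↦ hEper z l hl).isBounded z w
  simp only [hEdef, hz, hw, if_false, hHz z hz, hHz w hw] at hconst
  have hw0 : thetaQuot τ w w = 0 := by simp [thetaQuot, theta]
  rw [hw0] at hconst
  linear_combination hconst

lemma wp_sub_wp (τ : UpperHalfPlane) {z w : ℂ} (hz : z ∉ (tauLattice τ).lattice)
    (hw : w ∉ (tauLattice τ).lattice) :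
    wp τ 1 z - wp τ 1 w = -deriv (theta τ) 0 ^ 2 *
      (theta τ (z + w) * theta τ (z - w) / (theta τ z ^ 2 * theta τ w ^ 2)) := by
  have h := thetaQuot_eq τ hz hw
  rw [thetaQuot] at h
  rw [wp_eq_weierstrassP_s12, wp_eq_weierstrassP_s12]
  have h1 := theta_ne_zero τ hz
  have h2 := theta_ne_zero τ hw
  have h3 := deriv_theta_zero_ne τ
  field_simp at h ⊢
  linear_combination h

/-! ### Siegel functions -/

lemma siegel_eq (τ : UpperHalfPlane) (r s : ℚ) :
    siegel r s τ = Complex.exp (π * Complex.I * τ / 6 + π * Complex.I * r * (r * τ + s)) *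
      theta τ (r * τ + s) := by
  have hq := norm_q_lt_one τ
  rw [siegel, theta, qProd, qProd, ← (multipliable_qProd hq _).tprod_mul (multipliable_qProd hq _)]
  have hprod : ∀ n : ℕ,
      ((1 - qpow τ ((n + 1 : ℝ) + (r : ℝ)) * Complex.exp (2 * π * Complex.I * s)) *
        (1 - qpow τ ((n + 1 : ℝ) - (r : ℝ)) * Complex.exp (-(2 * π * Complex.I * s)))) =
      (1 - Complex.exp (2 * π * Complex.I * τ) ^ (n + 1) *
          Complex.exp (2 * π * Complex.I * (r * τ + s))) *
        (1 - Complex.exp (2 * π * Complex.I * τ) ^ (n + 1) *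
          Complex.exp (-(2 * π * Complex.I * (r * τ + s)))) := by
    intro n
    simp only [qpow, ← Complex.exp_nat_mul, ← Complex.exp_add]
    push_cast
    ring_nf
  simp only [hprod]
  rw [← mul_assoc]
  congr 1
  simp only [qpow, mul_sub, ← Complex.exp_add, neg_mul, mul_one]
  push_cast
  ring_nf

lemma ratCast_notMem (τ : UpperHalfPlane) {r s : ℚ} (h : ¬ (r.den = 1 ∧ s.den = 1)) :
    (r * τ + s : ℂ) ∉ (tauLattice τ).lattice := by
  have := (mul_ω₁_add_mul_ω₂_mem_lattice (L := tauLattice τ) (α := r) (β := s)).not.mpr h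
  simpa [tauLattice] using this

/-- The constant in front of the Siegel quotient does not depend on the two characteristics. -/
lemma wprs_sub_wprs (τ : UpperHalfPlane) {r s r' s' : ℚ} (ha : ¬ (r.den = 1 ∧ s.den = 1))
    (hb : ¬ (r'.den = 1 ∧ s'.den = 1)) :
    wprs r s τ - wprs r' s' τ =
      -deriv (theta τ) 0 ^ 2 * Complex.exp (π * Complex.I * τ / 3) *
        (siegel (r + r') (s + s') τ * siegel (r - r') (s - s') τ /
          (siegel r s τ ^ 2 * siegel r' s' τ ^ 2)) := by
  rw [wprs, wprs, wp_sub_wp τ (ratCast_notMem τ ha) (ratCast_notMem τ hb)]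
  have e1 : ((r + r' : ℚ) * τ + (s + s' : ℚ) : ℂ) = r * τ + s + (r' * τ + s') := by
    push_cast; ring
  have e2 : ((r - r' : ℚ) * τ + (s - s' : ℚ) : ℂ) = r * τ + s - (r' * τ + s') := by
    push_cast; ring
  simp only [siegel_eq, e1, e2]
  have h1 := theta_ne_zero τ (ratCast_notMem τ ha)
  have h2 := theta_ne_zero τ (ratCast_notMem τ hb)
  -- The parallelogram law for the quadratic form `(r, s) ↦ r (r τ + s)`.
  have e : Complex.exp (π * Complex.I * τ / 3) *
      (Complex.exp (π * Complex.I * τ / 6 +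
        π * Complex.I * (r + r' : ℚ) * (r * τ + s + (r' * τ + s'))) *
      Complex.exp (π * Complex.I * τ / 6 +
        π * Complex.I * (r - r' : ℚ) * (r * τ + s - (r' * τ + s')))) =
      Complex.exp (π * Complex.I * τ / 6 + π * Complex.I * r * (r * τ + s)) ^ 2 *
      Complex.exp (π * Complex.I * τ / 6 + π * Complex.I * r' * (r' * τ + s')) ^ 2 := by
    simp only [← Complex.exp_add, ← Complex.exp_nat_mul]
    congr 1
    push_cast
    ring
  have n1 := Complex.exp_ne_zero (π * Complex.I * τ / 6 + π * Complex.I * r * (r * τ + s))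
  have n2 := Complex.exp_ne_zero (π * Complex.I * τ / 6 + π * Complex.I * r' * (r' * τ + s'))
  generalize Complex.exp (π * Complex.I * τ / 6 + π * Complex.I * r * (r * τ + s)) = E₁ at *
  generalize Complex.exp (π * Complex.I * τ / 6 + π * Complex.I * r' * (r' * τ + s')) = E₂ at *
  generalize theta τ (r * τ + s + (r' * τ + s')) = T₁ at *
  generalize theta τ (r * τ + s - (r' * τ + s')) = T₂ at *
  generalize theta τ (r * τ + s) = T₃ at *
  generalize theta τ (r' * τ + s') = T₄ at *
  rw [mul_pow, mul_pow, mul_assoc (-_), neg_mul, neg_mul, neg_inj]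
  congr 1
  rw [← mul_div_assoc, div_eq_div_iff (by positivity) (by positivity)]
  linear_combination (-T₁ * T₂ * T₃ ^ 2 * T₄ ^ 2) * e

theorem conjugate_difference_eq_siegel_product
    (m n : ℕ) (hm : 2 ≤ m) (hn : 1 ≤ n) (t : ℤ)
    (hcop : Int.gcd t (m * n) = 1)
    (ht1 : ¬ ((m * n : ℤ) ∣ (t - 1))) (ht2 : ¬ ((m * n : ℤ) ∣ (t + 1)))
    (τ : UpperHalfPlane) :
    (wprs 0 ((t : ℚ) / (m * n : ℚ)) τ - wprs 0 (1 / (m * n : ℚ)) τ) /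
        (wprs 0 (1 / (m : ℚ)) τ - wprs (1 / (m : ℚ)) 0 τ) =
      siegel 0 (((t : ℚ) + 1) / (m * n : ℚ)) τ * siegel 0 (((t : ℚ) - 1) / (m * n : ℚ)) τ *
          siegel 0 (1 / (m : ℚ)) τ ^ 2 * siegel (1 / (m : ℚ)) 0 τ ^ 2 /
        (siegel (1 / (m : ℚ)) (1 / (m : ℚ)) τ * siegel (-(1 / (m : ℚ))) (1 / (m : ℚ)) τ *
          siegel 0 ((t : ℚ) / (m * n : ℚ)) τ ^ 2 * siegel 0 (1 / (m * n : ℚ)) τ ^ 2) := by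
  have hmn : 2 ≤ m * n := by nlinarith
  have hden (a : ℤ) (k : ℕ) (hk : 2 ≤ k) (hg : Int.gcd a k = 1) : ((a : ℚ) / (k : ℚ)).den ≠ 1 := by
    have := Rat.den_div_eq_of_coprime (a := a) (b := k) (by omega) hg
    push_cast at this
    omega
  have d1 : ((t : ℚ) / (m * n : ℚ)).den ≠ 1 := by
    have := hden t (m * n) hmn (by exact_mod_cast hcop)
    exact_mod_cast this
  have d2 : (1 / (m * n : ℚ)).den ≠ 1 := by
    have := hden 1 (m * n) hmn (by simp)
    rwa [Int.cast_one, Nat.cast_mul] at this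
  have d3 : (1 / (m : ℚ)).den ≠ 1 := by
    have := hden 1 m hm (by simp)
    rwa [Int.cast_one] at this
  rw [wprs_sub_wprs τ (fun h ↦ d1 h.2) (fun h ↦ d2 h.2),
    wprs_sub_wprs τ (fun h ↦ d3 h.2) (fun h ↦ d3 h.1)]
  rw [mul_div_mul_left _ _ (mul_ne_zero (neg_ne_zero.mpr (pow_ne_zero 2 (deriv_theta_zero_ne τ)))
    (Complex.exp_ne_zero _))]
  rw [← add_div, ← sub_div, add_zero, sub_zero, add_zero, sub_zero, zero_add, zero_sub,
    div_div_div_eq]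
  congr 1 <;> ring
end
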